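/- For the edge ideal I(G) of a simple graph G, the Green–Lazarsfeld index of I(G) equals the length of the shortest induced cycle of length greater than 3 in the complement graph of G, minus 3 (and is infinite if no such cycle exists). -/

import Mathlib

open Finsupp

namespace EP

variable (K : Type) [Field K]

/-! ## Simplicial chains over a linearly ordered vertex set -/

variable {V : Type} [Fintype V] [DecidableEq V] [LinearOrder V]

/-- Boundary of a single (oriented) face, given as a finset. -/
noncomputable def bdFace (s : Finset V) : Finset V →₀ K :=
  ∑ v ∈ s, ((-1 : K) ^ ((s.filter (fun w => w < v)).card)) • Finsupp.single (s.erase v) 1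

/-- The simplicial boundary map on the free module on all finsets of vertices
(the augmented oriented chain complex, with the empty set playing the role of
the `(-1)`-dimensional face). -/
noncomputable def bdS : (Finset V →₀ K) →ₗ[K] (Finset V →₀ K) :=
  Finsupp.lsum K fun s => LinearMap.toSpanSingleton K (Finset V →₀ K) (bdFace K s)

/-- Chains supported on faces of a complex `Δ` having `k` vertices. -/
noncomputable def faceSpan (Δ : Set (Finset V)) (k : ℕ) : Submodule K (Finset V →₀ K) :=
  Submodule.span K {c | ∃ F ∈ Δ, F.card = k ∧ c = Finsupp.single F 1}

/-- Dimension of the `d`-th reduced simplicial homology of `Δ` over `K`. -/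
noncomputable def redHomRank (Δ : Set (Finset V)) (d : ℕ) : ℕ :=
  Module.finrank K ↥(faceSpan K Δ (d+1) ⊓ LinearMap.ker (bdS K)) -
    Module.finrank K
      ↥(Submodule.map (bdS K) (faceSpan K Δ (d+2)) ⊓
          (faceSpan K Δ (d+1) ⊓ LinearMap.ker (bdS K)))

/-- The flag complex of a graph: faces are the cliques. -/
def flagComplex (G : SimpleGraph V) : Set (Finset V) :=
  {F | ∀ i ∈ F, ∀ j ∈ F, i ≠ j → G.Adj i j}

/-- The flag complex of the induced subgraph of `G` on `W`. -/
def flagComplexOn (G : SimpleGraph V) (W : Finset V) : Set (Finset V) :=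
  {F | (F : Set V) ⊆ (W : Set V) ∧ ∀ i ∈ F, ∀ j ∈ F, i ≠ j → G.Adj i j}

/-- The induced subcomplex of `Δ` on a vertex subset `W`. -/
def restrictComplex (Δ : Set (Finset V)) (W : Finset V) : Set (Finset V) :=
  {F | F ∈ Δ ∧ F ⊆ W}

/-- The oriented `1`-chain `[a,b]` (so `[a,b] = -[b,a]`). -/
noncomputable def edgeChain (a b : V) : Finset V →₀ K :=
  if a < b then Finsupp.single {a, b} 1 else -Finsupp.single {a, b} 1

/-- The oriented `2`-chain `[x,y,z]`, antisymmetric under transpositions. -/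
noncomputable def triChain (x y z : V) : Finset V →₀ K :=
  if (x < y ∧ y < z) ∨ (y < z ∧ z < x) ∨ (z < x ∧ x < y)
  then Finsupp.single {x, y, z} 1
  else -Finsupp.single {x, y, z} 1

/-! ## Graded Betti numbers of monomial ideals via the Taylor complex -/

variable {n : ℕ}

/-- The multidegree lcm of the monomial generators indexed by `S`. -/
def mlcm {r : ℕ} (g : Fin r → (Fin n → ℕ)) (S : Finset (Fin r)) : Fin n → ℕ :=
  fun x => S.sup fun k => g k x

/-- The differential of the Taylor complex tensored with the residue field `K`. -/
noncomputable def bdT {r : ℕ} (g : Fin r → (Fin n → ℕ)) :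
    (Finset (Fin r) →₀ K) →ₗ[K] (Finset (Fin r) →₀ K) :=
  Finsupp.lsum K fun S => LinearMap.toSpanSingleton K (Finset (Fin r) →₀ K)
    (∑ k ∈ S, if mlcm g (S.erase k) = mlcm g S
      then ((-1 : K) ^ ((S.filter (fun j => j < k)).card)) • Finsupp.single (S.erase k) (1 : K)
      else 0)

/-- The degree-`j` strand of the Taylor complex in homological degree `p`. -/
noncomputable def strand {r : ℕ} (g : Fin r → (Fin n → ℕ)) (p j : ℕ) :
    Submodule K (Finset (Fin r) →₀ K) :=
  Submodule.span K
    {c | ∃ S : Finset (Fin r), S.card = p ∧ (∑ x, mlcm g S x) = j ∧ c = Finsupp.single S 1}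

/-- `dim_K Tor_p(S/I, K)_j`, computed from the Taylor complex on the monomial
generators `g` of `I`. -/
noncomputable def torRank {r : ℕ} (g : Fin r → (Fin n → ℕ)) (p j : ℕ) : ℕ :=
  Module.finrank K ↥(strand K g p j ⊓ LinearMap.ker (bdT K g)) -
    Module.finrank K
      ↥(Submodule.map (bdT K g) (strand K g (p+1) j) ⊓
          (strand K g p j ⊓ LinearMap.ker (bdT K g)))

/-- The graded Betti number `β_{i,j}(I)` of the monomial ideal `I` generated by
the monomials with exponent vectors `g`, i.e. `dim_K Tor_i(I, K)_j = dim_K Tor_{i+1}(S/I, K)_j`. -/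
noncomputable def betti {r : ℕ} (g : Fin r → (Fin n → ℕ)) (i j : ℕ) : ℕ :=
  torRank K g (i+1) j

/-- The monomial with exponent vector `a`. -/
noncomputable def mono (a : Fin n → ℕ) : MvPolynomial (Fin n) K :=
  MvPolynomial.monomial (Finsupp.equivFunOnFinite.symm a) 1

/-- `g` is a list of exponent vectors of monomials generating the ideal `I`. -/
def IsGenSet {r : ℕ} (g : Fin r → (Fin n → ℕ)) (I : Ideal (MvPolynomial (Fin n) K)) : Prop :=
  Ideal.span (Set.range fun k => mono K (g k)) = I

/-- The ideal (generated by the monomials with exponent vectors `g`) has a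
`d`-linear resolution. -/
def HasLinRes {r : ℕ} (g : Fin r → (Fin n → ℕ)) (d : ℕ) : Prop :=
  ∀ i j, betti K g i j ≠ 0 → j = i + d

/-- Castelnuovo–Mumford regularity of a monomial ideal, from its Betti numbers. -/
noncomputable def regT {r : ℕ} (g : Fin r → (Fin n → ℕ)) : ℕ :=
  sSup {d | ∃ i j, betti K g i j ≠ 0 ∧ j = i + d}

/-! ## Edge ideals -/

/-- The edge ideal of a simple graph. -/
noncomputable def edgeIdeal (G : SimpleGraph (Fin n)) : Ideal (MvPolynomial (Fin n) K) :=
  Ideal.span {m | ∃ i j : Fin n, G.Adj i j ∧ m = MvPolynomial.X i * MvPolynomial.X j}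

/-- The edge set of `G` as a finset. -/
noncomputable def edgeFins (G : SimpleGraph (Fin n)) : Finset (Sym2 (Fin n)) :=
  letI : Fintype ↥G.edgeSet := Fintype.ofFinite _
  G.edgeFinset

/-- The canonical monomial (exponent vector) generators of the edge ideal of `G`. -/
noncomputable def edgeGens (G : SimpleGraph (Fin n)) : Fin (edgeFins G).card → (Fin n → ℕ) :=
  fun k x => if x ∈ ((edgeFins G).equivFin.symm k : Sym2 (Fin n)) then 1 else 0

/-- The graded Betti numbers `β_{i,j}(I(G))` of the edge ideal of `G` over `K`. -/
noncomputable def gBetti (G : SimpleGraph (Fin n)) (i j : ℕ) : ℕ :=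
  betti K (edgeGens G) i j

/-- The projective dimension `pd(I(G))` of the edge ideal of `G` over `K`. -/
noncomputable def gPd (G : SimpleGraph (Fin n)) : ℕ :=
  sSup {i | ∃ j, gBetti K G i j ≠ 0}

/-- The Green–Lazarsfeld index of the edge ideal of `G` over `K`
(`⊤` iff the ideal has a linear resolution). -/
noncomputable def gIndex (G : SimpleGraph (Fin n)) : ℕ∞ :=
  sInf {N : ℕ∞ | ∃ i j : ℕ, N = (i : ℕ∞) ∧ i + 2 < j ∧ gBetti K G i j ≠ 0}

/-- The regularity of the edge ideal of `G` over `K`. -/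
noncomputable def gReg (G : SimpleGraph (Fin n)) : ℕ :=
  sSup {d | ∃ i j, gBetti K G i j ≠ 0 ∧ j = i + d}

/-- The edge ideal of `G` has a (2-)linear resolution over `K`. -/
def gLinRes (G : SimpleGraph (Fin n)) : Prop :=
  ∀ i j, gBetti K G i j ≠ 0 → j = i + 2

/-- The edge ideal of `G` has almost maximal finite index over `K`:
`index(I(G)) = pd(I(G)) - 1` (with the index finite). -/
def AMFI (G : SimpleGraph (Fin n)) : Prop :=
  gIndex K G + 1 = (gPd K G : ℕ∞)

/-! ## Graph-theoretic notions -/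

/-- `H` contains an induced (chordless) cycle of length `l`. -/
def HasInducedCycle {W : Type} (H : SimpleGraph W) (l : ℕ) : Prop :=
  ∃ f : ZMod l → W, Function.Injective f ∧
    ∀ i j : ZMod l, H.Adj (f i) (f j) ↔ (j = i + 1 ∨ i = j + 1)

/-- `H` is chordal: it has no induced cycle of length greater than `3`. -/
def Chordal {W : Type} (H : SimpleGraph W) : Prop :=
  ∀ l : ℕ, 3 < l → ¬ HasInducedCycle H l

end EP

/-!
The sets of edges of `G` with union `W` index the multidegree-`W` strand of the Taylor complex, and
`β_{i,j}(I(G)) ≠ 0` exactly when the strand of some `W` with `j` elements has homology at sets of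
`i + 1` edges. For a vertex `v ∈ W`, the strands of `W` and `W \ {v}` fit into a long exact
sequence whose third term is, up to a shift by the number of neighbours of `v` in `G`, the strand of
the neighbours of `v` in `Gᶜ`.

Let homology be non-zero with `i + 2 < |W|`. While `|W| > i + 3`, the long exact sequence passes it
on to `W \ {v}` or to the neighbours of `v`, keeping a failure of linearity and not increasing `i`.
At `|W| = i + 3` the graph `Gᶜ` has an induced cycle of length between `4` and `i + 3` on `W`:
otherwise, by Dirac's theorem, it has a simplicial vertex `v` in `W`, whose neighbours form a clique
and contribute nothing, so that `W \ {v}` inherits the homology. Conversely, on the vertices of an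
induced cycle of length `l`, deleting a vertex leaves an acyclic path, and its two neighbours are
not adjacent in `Gᶜ`, which yields homology at sets of `l - 2` edges.
-/

namespace EP

section Restrict

variable {α : Type*} {R : Type*} [Ring R]

open scoped Classical in
/-- The projection of the free module on `α` onto the coordinates in `A`. -/
noncomputable def restrict (R : Type*) [Ring R] (A : Set α) : (α →₀ R) →ₗ[R] (α →₀ R) :=
  (supported R R A).subtype ∘ₗ restrictDom R R A

lemma restrict_apply (A : Set α) (x : α →₀ R) (a : α) : restrict R A x a = A.indicator x a := by
  classical
  exact congrFun (filter_eq_indicator (· ∈ A) x) a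

lemma restrict_mem_supported (A : Set α) (x : α →₀ R) : restrict R A x ∈ supported R R A :=
  Subtype.prop _

lemma restrict_eq_self {A : Set α} {x : α →₀ R} (hx : x ∈ supported R R A) :
    restrict R A x = x := by
  ext a
  rw [restrict_apply, Set.indicator_eq_self.2]
  rwa [fun_support_eq, ← mem_supported R]

lemma restrict_eq_zero_iff {A : Set α} {x : α →₀ R} :
    restrict R A x = 0 ↔ x ∈ supported R R Aᶜ := by
  simp only [Finsupp.ext_iff, restrict_apply, coe_zero, Pi.zero_apply, Set.indicator_apply_eq_zero,
    mem_supported', Set.mem_compl_iff, not_not]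

lemma restrict_restrict (A B : Set α) (x : α →₀ R) :
    restrict R A (restrict R B x) = restrict R (A ∩ B) x := by
  ext a
  rw [restrict_apply, restrict_apply, ← Set.indicator_indicator]
  exact congrFun (Set.indicator_congr fun b _ => restrict_apply B x b) a

lemma restrict_single_of_mem {A : Set α} {a : α} (ha : a ∈ A) (c : R) :
    restrict R A (single a c) = single a c :=
  restrict_eq_self (single_mem_supported R c ha)

lemma restrict_single_of_notMem {A : Set α} {a : α} (ha : a ∉ A) (c : R) :
    restrict R A (single a c) = 0 :=
  restrict_eq_zero_iff.2 (single_mem_supported R c ha)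

lemma restrict_mem_supported_inter {A B : Set α} {x : α →₀ R} (hx : x ∈ supported R R A) :
    restrict R B x ∈ supported R R (A ∩ B) := by
  rw [← restrict_eq_self hx, restrict_restrict, Set.inter_comm]
  exact restrict_mem_supported _ x

lemma sub_restrict_mem_supported {A B : Set α} {x : α →₀ R} (hx : x ∈ supported R R A) :
    x - restrict R B x ∈ supported R R (A \ B) := by
  rw [Set.sdiff_eq, supported_inter]
  refine ⟨sub_mem hx (supported_mono Set.inter_subset_left (restrict_mem_supported_inter hx)),
    restrict_eq_zero_iff.1 ?_⟩
  rw [map_sub, restrict_restrict, Set.inter_self, sub_self]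

end Restrict

section Chains

variable {R : Type*} [Ring R] {E : Type*}

/-- The chains on the faces in `F` with exactly `p` elements. -/
noncomputable def chains (R : Type*) [Ring R] (F : Set (Finset E)) (p : ℤ) :
    Submodule R (Finset E →₀ R) :=
  supported R R (F ∩ {S | (S.card : ℤ) = p})

variable {F U : Set (Finset E)} {p : ℤ} {x : Finset E →₀ R}

lemma chains_mono {F' : Set (Finset E)} (h : F ⊆ F') : chains R F p ≤ chains R F' p :=
  supported_mono (Set.inter_subset_inter_left _ h)

lemma chains_le_supported : chains R F p ≤ supported R R F :=
  supported_mono Set.inter_subset_left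

lemma restrict_mem_chains (A : Set (Finset E)) (hx : x ∈ chains R F p) :
    restrict R A x ∈ chains R (F ∩ A) p := by
  rw [chains, Set.inter_right_comm]
  exact restrict_mem_supported_inter hx

lemma mem_chains_sdiff (hx : x ∈ chains R F p) (hU : restrict R U x = 0) :
    x ∈ chains R (F \ U) p := by
  rw [chains, ← Set.inter_sdiff_right_comm, ← sub_zero x, ← hU]
  exact sub_restrict_mem_supported hx

lemma chains_eq_bot (h : ∀ S ∈ F, (S.card : ℤ) ≠ p) : chains R F p = ⊥ := by
  have hempty : F ∩ {S | (S.card : ℤ) = p} = ∅ :=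
    Set.eq_empty_of_forall_notMem fun S hS => h S hS.1 hS.2
  rw [chains, hempty, supported_empty]

end Chains

section Boundary

variable {K : Type} [Field K] {E : Type} [LinearOrder E]

/-- The coefficient `±1` of the face `S.erase e` in the boundary of `S`. -/
def faceSign (K : Type) [Field K] (S : Finset E) (e : E) : K :=
  (-1) ^ (S.filter (· < e)).card

lemma faceSign_mul_self (S : Finset E) (e : E) : faceSign K S e * faceSign K S e = 1 := by
  rw [faceSign, ← mul_pow, neg_one_mul, neg_neg, one_pow]

lemma faceSign_erase_self (S : Finset E) (e : E) :
    faceSign K (S.erase e) e = faceSign K S e := by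
  rw [faceSign, Finset.filter_erase, Finset.erase_eq_of_notMem (by simp), faceSign]

lemma faceSign_mul_faceSign_erase {S : Finset E} {e f : E} (he : e ∈ S) (hf : f ∈ S)
    (hef : e ≠ f) :
    faceSign K S e * faceSign K (S.erase e) f = -(faceSign K S f * faceSign K (S.erase f) e) := by
  wlog h : e < f generalizing e f
  · rw [this hf he hef.symm (lt_of_le_of_ne (not_lt.1 h) hef.symm), neg_neg]
  have hcard : (S.filter (· < f)).card = ((S.filter (· < f)).erase e).card + 1 :=
    (Finset.card_erase_add_one (Finset.mem_filter.2 ⟨he, h⟩)).symm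
  have hlt : (S.filter (· < e)).erase f = S.filter (· < e) :=
    Finset.erase_eq_of_notMem (by simp [h.le])
  simp only [faceSign, Finset.filter_erase, hcard, hlt]
  ring

lemma bdS_single (S : Finset E) (c : K) :
    bdS K (single S c) = ∑ e ∈ S, single (S.erase e) (c * faceSign K S e) := by
  simp only [bdS, bdFace, lsum_single, LinearMap.toSpanSingleton_apply, Finset.smul_sum,
    smul_single, smul_eq_mul, mul_one, faceSign]

lemma bdS_bdS (x : Finset E →₀ K) : bdS K (bdS K x) = 0 := by
  induction x using induction_linear with
  | zero => simp only [map_zero]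
  | add x y hx hy => rw [map_add, map_add, hx, hy, add_zero]
  | single S c =>
    simp only [bdS_single, map_sum]
    rw [Finset.sum_sigma']
    refine Finset.sum_involution (fun p _ => ⟨p.2, p.1⟩) ?_ ?_ ?_ fun _ _ => rfl
    all_goals
      rintro ⟨e, f⟩ hp
      simp only [Finset.mem_sigma, Finset.mem_erase] at hp
      obtain ⟨he, hfe, hf⟩ := hp
    · rw [Finset.erase_right_comm, ← single_add, mul_assoc, mul_assoc,
        faceSign_mul_faceSign_erase he hf hfe.symm, mul_neg, neg_add_cancel, single_zero]
    · exact fun _ h => hfe (congrArg Sigma.fst h)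
    · simpa only [Finset.mem_sigma, Finset.mem_erase] using ⟨hf, hfe.symm, he⟩

lemma bdS_mem_supported {A B : Set (Finset E)} (h : ∀ S ∈ A, ∀ e ∈ S, S.erase e ∈ B)
    {x : Finset E →₀ K} (hx : x ∈ supported K K A) : bdS K x ∈ supported K K B := by
  rw [supported_eq_span_single] at hx
  induction hx using Submodule.span_induction with
  | zero => rw [map_zero]; exact zero_mem _
  | add x y _ _ hx hy => rw [map_add]; exact add_mem hx hy
  | smul c x _ hx => rw [map_smul]; exact Submodule.smul_mem _ c hx
  | mem x hx =>
    obtain ⟨S, hS, rfl⟩ := hx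
    rw [bdS_single]
    exact sum_mem fun e he => single_mem_supported K _ (h S hS e he)

lemma bdS_mem_supported_of_isLowerSet {A : Set (Finset E)} (hA : IsLowerSet A)
    {x : Finset E →₀ K} (hx : x ∈ supported K K A) : bdS K x ∈ supported K K A :=
  bdS_mem_supported (fun _ hS e _ => hA (Finset.erase_subset e _) hS) hx

/-- The boundary operator of the subquotient of the simplex on `E` with faces `F`. It squares to
zero on chains of `F` when `F` is convex for inclusion. -/
noncomputable def relBoundary (K : Type) [Field K] (F : Set (Finset E)) :
    (Finset E →₀ K) →ₗ[K] (Finset E →₀ K) :=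
  restrict K F ∘ₗ bdS K

/-- Exactness of the chains of `F` at the spot of faces with `p` elements. The degree is an integer
so that it can be lowered without truncation. -/
def ExactAt (K : Type) [Field K] (F : Set (Finset E)) (p : ℤ) : Prop :=
  chains K F p ⊓ LinearMap.ker (relBoundary K F) ≤ (chains K F (p + 1)).map (relBoundary K F)

variable {F U : Set (Finset E)} {p : ℤ} {x : Finset E →₀ K}

lemma relBoundary_mem_chains {F' : Set (Finset E)} (hx : x ∈ chains K F' (p + 1)) :
    relBoundary K F x ∈ chains K F p := by
  rw [chains, Set.inter_comm]
  refine restrict_mem_supported_inter (bdS_mem_supported (fun S hS e he => ?_) hx)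
  have hcard := Finset.card_erase_add_one he
  have hS' : (S.card : ℤ) = p + 1 := hS.2
  rw [Set.mem_ofPred_eq]
  lia

lemma restrict_relBoundary (A : Set (Finset E)) :
    restrict K A (relBoundary K F x) = relBoundary K (F ∩ A) x := by
  rw [relBoundary, LinearMap.comp_apply, restrict_restrict, Set.inter_comm]
  rfl

/-- The faces of members of `F` outside `F` form a lower set, so discarding them before taking the
second boundary changes nothing inside `F`. -/
lemma relBoundary_relBoundary (hF : F.OrdConnected) (hx : x ∈ supported K K F) :
    relBoundary K F (relBoundary K F x) = 0 := by
  set L : Set (Finset E) := ↑(lowerClosure F)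
  have hL : IsLowerSet (L \ F) := fun S T hTS hS => by
    obtain ⟨R, hRF, hSR⟩ := hS.1
    exact ⟨(lowerClosure F).lower hTS hS.1, fun hT => hS.2 (hF.out hT hRF ⟨hTS, hSR⟩)⟩
  have hdiff : bdS K x - relBoundary K F x ∈ supported K K (L \ F) :=
    sub_restrict_mem_supported (bdS_mem_supported_of_isLowerSet (lowerClosure F).lower
      (supported_mono subset_lowerClosure hx))
  have hbd := bdS_mem_supported_of_isLowerSet hL hdiff
  rw [map_sub, bdS_bdS, zero_sub, neg_mem_iff] at hbd
  exact restrict_eq_zero_iff.2 (supported_mono (fun S hS => hS.2) hbd)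

lemma relBoundary_inter_eq_zero (hU : IsUpperSet U) (hx : x ∈ supported K K Uᶜ) :
    relBoundary K (F ∩ U) x = 0 :=
  restrict_eq_zero_iff.2 <| supported_mono (Set.compl_subset_compl.2 Set.inter_subset_right)
    (bdS_mem_supported_of_isLowerSet hU.compl hx)

lemma relBoundary_inter_restrict (hU : IsUpperSet U) :
    relBoundary K (F ∩ U) (restrict K U x) = relBoundary K (F ∩ U) x := by
  have hcompl : x - restrict K U x ∈ supported K K Uᶜ :=
    restrict_eq_zero_iff.1 (by rw [map_sub, restrict_restrict, Set.inter_self, sub_self])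
  rw [← sub_eq_zero, ← map_sub, ← neg_sub, map_neg, relBoundary_inter_eq_zero hU hcompl, neg_zero]

lemma relBoundary_sdiff_eq (hU : IsUpperSet U) (hx : x ∈ supported K K (F \ U)) :
    relBoundary K (F \ U) x = relBoundary K F x := by
  have hUx : restrict K U (relBoundary K F x) = 0 := by
    rw [restrict_relBoundary, relBoundary_inter_eq_zero hU (supported_mono (fun S hS => hS.2) hx)]
  rw [Set.sdiff_eq, ← restrict_relBoundary, restrict_eq_self (restrict_eq_zero_iff.1 hUx)]

lemma ExactAt.of_card_ne (h : ∀ S ∈ F, (S.card : ℤ) ≠ p) : ExactAt K F p := by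
  rw [ExactAt, chains_eq_bot h, bot_inf_eq]
  exact bot_le

lemma nonneg_of_not_exactAt (h : ¬ ExactAt K F p) : 0 ≤ p := by
  by_contra! hp
  exact h (.of_card_ne fun S _ => by lia)

lemma not_exactAt_singleton (S : Finset E) : ¬ ExactAt K {S} S.card := by
  have hS : single S (1 : K) ∈ chains K {S} S.card :=
    single_mem_supported K _ ⟨Set.mem_singleton S, rfl⟩
  have hbd : relBoundary K {S} (single S (1 : K)) = 0 := by
    rw [← Submodule.mem_bot K, ← chains_eq_bot (F := {S}) (p := S.card - 1)]
    · exact relBoundary_mem_chains (by rwa [sub_add_cancel])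
    · rintro _ rfl
      lia
  intro h
  have hmap := h ⟨hS, hbd⟩
  rw [chains_eq_bot (by rintro _ rfl; lia), Submodule.map_bot, Submodule.mem_bot,
    single_eq_zero] at hmap
  exact one_ne_zero hmap

end Boundary

section ExactSequence

variable {K : Type} [Field K] {E : Type} [LinearOrder E] {F U : Set (Finset E)} {p : ℤ}

/-! For convex `F` and an upper set `U`, the chains of `F \ U` form a subcomplex of those of `F`
with quotient the chains of `F ∩ U`. The next three lemmas are the resulting long exact sequence. -/

lemma ExactAt.of_sdiff_of_inter (hF : F.OrdConnected) (hU : IsUpperSet U)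
    (hsub : ExactAt K (F \ U) p) (hquot : ExactAt K (F ∩ U) p) : ExactAt K F p := by
  rintro x ⟨hx, hx0⟩
  rw [SetLike.mem_coe, LinearMap.mem_ker] at hx0
  obtain ⟨y, hy, hyx⟩ := hquot ⟨restrict_mem_chains U hx, by
    rw [SetLike.mem_coe, LinearMap.mem_ker, relBoundary_inter_restrict hU, ← restrict_relBoundary,
      hx0, map_zero]⟩
  replace hy : y ∈ chains K F (p + 1) := chains_mono Set.inter_subset_left hy
  have hrest : x - relBoundary K F y ∈ chains K (F \ U) p :=
    mem_chains_sdiff (sub_mem hx (relBoundary_mem_chains hy))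
      (by rw [map_sub, restrict_relBoundary, hyx, sub_self])
  obtain ⟨z, hz, hzx⟩ := hsub ⟨hrest, by
    rw [SetLike.mem_coe, LinearMap.mem_ker, relBoundary_sdiff_eq hU (chains_le_supported hrest),
      map_sub, hx0, relBoundary_relBoundary hF (chains_le_supported hy), sub_zero]⟩
  refine ⟨y + z, add_mem hy (chains_mono Set.sdiff_subset hz), ?_⟩
  rw [map_add, ← relBoundary_sdiff_eq hU (chains_le_supported hz), hzx, add_sub_cancel]

lemma ExactAt.inter (hF : F.OrdConnected) (hU : IsUpperSet U)
    (htotal : ExactAt K F (p + 1)) (hsub : ExactAt K (F \ U) p) : ExactAt K (F ∩ U) (p + 1) := by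
  rintro x ⟨hx, hx0⟩
  rw [SetLike.mem_coe, LinearMap.mem_ker] at hx0
  have hxF : x ∈ chains K F (p + 1) := chains_mono Set.inter_subset_left hx
  have hbd : relBoundary K F x ∈ chains K (F \ U) p :=
    mem_chains_sdiff (relBoundary_mem_chains hxF) (by rw [restrict_relBoundary, hx0])
  obtain ⟨y, hy, hyx⟩ := hsub ⟨hbd, by
    rw [SetLike.mem_coe, LinearMap.mem_ker, relBoundary_sdiff_eq hU (chains_le_supported hbd),
      relBoundary_relBoundary hF (chains_le_supported hxF)]⟩
  rw [relBoundary_sdiff_eq hU (chains_le_supported hy)] at hyx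
  obtain ⟨z, hz, hzx⟩ := htotal ⟨sub_mem hxF (chains_mono Set.sdiff_subset hy), by
    rw [SetLike.mem_coe, LinearMap.mem_ker, map_sub, hyx, sub_self]⟩
  have hxU : restrict K U x = x :=
    restrict_eq_self (supported_mono Set.inter_subset_right (chains_le_supported hx))
  have hyU : restrict K U y = 0 :=
    restrict_eq_zero_iff.2 (supported_mono (fun S hS => hS.2) (chains_le_supported hy))
  refine ⟨restrict K U z, restrict_mem_chains U hz, ?_⟩
  rw [relBoundary_inter_restrict hU, ← restrict_relBoundary, hzx, map_sub, hxU, hyU, sub_zero]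

lemma ExactAt.sdiff (hF : F.OrdConnected) (hU : IsUpperSet U)
    (hquot : ExactAt K (F ∩ U) (p + 1)) (htotal : ExactAt K F p) : ExactAt K (F \ U) p := by
  rintro x ⟨hx, hx0⟩
  rw [SetLike.mem_coe, LinearMap.mem_ker, relBoundary_sdiff_eq hU (chains_le_supported hx)] at hx0
  obtain ⟨y, hy, hyx⟩ := htotal ⟨chains_mono Set.sdiff_subset hx, hx0⟩
  have hxU : restrict K U x = 0 :=
    restrict_eq_zero_iff.2 (supported_mono (fun S hS => hS.2) (chains_le_supported hx))
  obtain ⟨z, hz, hzy⟩ := hquot ⟨restrict_mem_chains U hy, by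
    rw [SetLike.mem_coe, LinearMap.mem_ker, relBoundary_inter_restrict hU, ← restrict_relBoundary,
      hyx, hxU]⟩
  replace hz : z ∈ chains K F (p + 1 + 1) := chains_mono Set.inter_subset_left hz
  have hrest : y - relBoundary K F z ∈ chains K (F \ U) (p + 1) :=
    mem_chains_sdiff (sub_mem hy (relBoundary_mem_chains hz))
      (by rw [map_sub, restrict_relBoundary, hzy, sub_self])
  refine ⟨y - relBoundary K F z, hrest, ?_⟩
  rw [relBoundary_sdiff_eq hU (chains_le_supported hrest), map_sub, hyx,
    relBoundary_relBoundary hF (chains_le_supported hz), sub_zero]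

end ExactSequence

section Cone

variable {K : Type} [Field K] {E : Type} [LinearOrder E] {F : Set (Finset E)} {e : E}

/-- The operator inserting `e` into every face, up to sign. It is a contracting homotopy of the
simplex, and of each of its subquotients that is closed under inserting and erasing `e`. -/
noncomputable def coneOp (K : Type) [Field K] (e : E) : (Finset E →₀ K) →ₗ[K] (Finset E →₀ K) :=
  lsum K fun S => LinearMap.toSpanSingleton K (Finset E →₀ K)
    (if e ∈ S then 0 else single (insert e S) (faceSign K S e))

lemma coneOp_single_of_mem {S : Finset E} (he : e ∈ S) (c : K) : coneOp K e (single S c) = 0 := by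
  rw [coneOp, lsum_single, LinearMap.toSpanSingleton_apply, if_pos he, smul_zero]

lemma coneOp_single_of_notMem {S : Finset E} (he : e ∉ S) (c : K) :
    coneOp K e (single S c) = single (insert e S) (c * faceSign K S e) := by
  rw [coneOp, lsum_single, LinearMap.toSpanSingleton_apply, if_neg he, smul_single, smul_eq_mul]

lemma coneOp_bdS_single_of_mem {S : Finset E} (he : e ∈ S) (c : K) :
    coneOp K e (bdS K (single S c)) = single S c := by
  rw [bdS_single, map_sum, Finset.sum_eq_single_of_mem e he]
  · rw [coneOp_single_of_notMem (Finset.notMem_erase e S), Finset.insert_erase he,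
      faceSign_erase_self, mul_assoc, faceSign_mul_self, mul_one]
  · exact fun f _ hfe => coneOp_single_of_mem (Finset.mem_erase.2 ⟨hfe.symm, he⟩) _

lemma faceSign_mul_faceSign {S : Finset E} {f : E} (he : e ∈ S) (hf : f ∈ S) (hef : e ≠ f) :
    faceSign K S e * faceSign K S f = -(faceSign K (S.erase e) f * faceSign K (S.erase f) e) := by
  linear_combination faceSign K (S.erase e) f * faceSign K S f *
    faceSign_mul_faceSign_erase (K := K) he hf hef -
    faceSign K S e * faceSign K S f * faceSign_mul_self (K := K) (S.erase e) f -
    faceSign K (S.erase e) f * faceSign K (S.erase f) e * faceSign_mul_self (K := K) S f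

lemma bdS_coneOp_add_coneOp_bdS (x : Finset E →₀ K) :
    bdS K (coneOp K e x) + coneOp K e (bdS K x) = x := by
  induction x using induction_linear with
  | zero => simp only [map_zero, add_zero]
  | add x y hx hy => rw [map_add, map_add, map_add, map_add, add_add_add_comm, hx, hy]
  | single S c =>
    by_cases he : e ∈ S
    · rw [coneOp_single_of_mem he, map_zero, zero_add, coneOp_bdS_single_of_mem he]
    obtain ⟨T, heT, rfl⟩ : ∃ T : Finset E, e ∈ T ∧ T.erase e = S :=
      ⟨insert e S, Finset.mem_insert_self e S, Finset.erase_insert he⟩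
    rw [coneOp_single_of_notMem he, Finset.insert_erase heT, faceSign_erase_self, bdS_single,
      bdS_single, ← Finset.add_sum_erase _ _ heT, map_sum, add_assoc, ← Finset.sum_add_distrib,
      mul_assoc, faceSign_mul_self, mul_one, Finset.sum_eq_zero, add_zero]
    intro f hf
    obtain ⟨hfe, hfT⟩ := Finset.mem_erase.1 hf
    rw [Finset.erase_right_comm, coneOp_single_of_notMem (Finset.notMem_erase e _),
      Finset.insert_erase (Finset.mem_erase.2 ⟨hfe.symm, heT⟩), faceSign_erase_self, ← single_add,
      mul_assoc, faceSign_mul_faceSign heT hfT hfe.symm, mul_assoc, ← mul_add, neg_add_cancel,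
      mul_zero, single_zero]

lemma coneOp_mem_chains (hF : ∀ S, e ∉ S → (insert e S ∈ F ↔ S ∈ F)) {p : ℤ}
    {x : Finset E →₀ K} (hx : x ∈ chains K F p) : coneOp K e x ∈ chains K F (p + 1) := by
  rw [chains, supported_eq_span_single] at hx
  induction hx using Submodule.span_induction with
  | zero => rw [map_zero]; exact zero_mem _
  | add x y _ _ hx hy => rw [map_add]; exact add_mem hx hy
  | smul c x _ hx => rw [map_smul]; exact Submodule.smul_mem _ c hx
  | mem x hx =>
    obtain ⟨S, ⟨hSF, hSp⟩, rfl⟩ := hx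
    by_cases he : e ∈ S
    · rw [coneOp_single_of_mem he]
      exact zero_mem _
    rw [coneOp_single_of_notMem he]
    refine single_mem_supported K _ ⟨(hF S he).2 hSF, ?_⟩
    rw [Set.mem_ofPred_eq, Finset.card_insert_of_notMem he, Nat.cast_add_one, hSp]

lemma coneOp_restrict (hF : ∀ S, e ∉ S → (insert e S ∈ F ↔ S ∈ F)) (x : Finset E →₀ K) :
    coneOp K e (restrict K F x) = restrict K F (coneOp K e x) := by
  induction x using induction_linear with
  | zero => simp only [map_zero]
  | add x y hx hy => rw [map_add, map_add, map_add, map_add, hx, hy]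
  | single S c =>
    by_cases he : e ∈ S <;> by_cases hS : S ∈ F
    · rw [restrict_single_of_mem hS, coneOp_single_of_mem he, map_zero]
    · rw [restrict_single_of_notMem hS, coneOp_single_of_mem he, map_zero, map_zero]
    · rw [restrict_single_of_mem hS, coneOp_single_of_notMem he,
        restrict_single_of_mem ((hF S he).2 hS)]
    · rw [restrict_single_of_notMem hS, coneOp_single_of_notMem he,
        restrict_single_of_notMem (mt (hF S he).1 hS), map_zero]

lemma ExactAt.of_insert_mem_iff (hF : ∀ S, e ∉ S → (insert e S ∈ F ↔ S ∈ F)) (p : ℤ) :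
    ExactAt K F p := by
  rintro x ⟨hx, hx0⟩
  refine ⟨coneOp K e x, coneOp_mem_chains hF hx, ?_⟩
  have hhomotopy := congrArg (restrict K F) (bdS_coneOp_add_coneOp_bdS (e := e) x)
  rwa [map_add, ← coneOp_restrict hF, show restrict K F (bdS K x) = 0 from hx0, map_zero, add_zero,
    restrict_eq_self (chains_le_supported hx)] at hhomotopy

end Cone

section Fibers

variable {K : Type} [Field K] {E : Type} [LinearOrder E] {F : Set (Finset E)} {p : ℤ}

lemma relBoundary_restrict_preimage {α : Type*} {φ : Finset E → α}
    (hφ : ∀ S ∈ F, ∀ e ∈ S, S.erase e ∈ F → φ (S.erase e) = φ S) (A : Set α) {x : Finset E →₀ K}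
    (hx : x ∈ supported K K F) :
    relBoundary K F (restrict K (φ ⁻¹' A) x) = restrict K (φ ⁻¹' A) (relBoundary K F x) := by
  have hstable (B : Set α) {y : Finset E →₀ K} (hy : y ∈ supported K K (F ∩ φ ⁻¹' B)) :
      relBoundary K F y ∈ supported K K (φ ⁻¹' B) := by
    have hbd : bdS K y ∈ supported K K (Fᶜ ∪ φ ⁻¹' B) :=
      bdS_mem_supported (fun S hS e he => or_iff_not_imp_left.2 fun hF => by
        rw [Set.mem_preimage, hφ S hS.1 e he (not_not.1 hF)]; exact hS.2) hy
    exact supported_mono (fun S hS => hS.1.resolve_left (not_not.2 hS.2))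
      (restrict_mem_supported_inter (B := F) hbd)
  have hin := hstable A (restrict_mem_supported_inter hx)
  have hout := hstable Aᶜ (sub_restrict_mem_supported (B := φ ⁻¹' A) hx)
  rw [map_sub, Set.preimage_compl, ← restrict_eq_zero_iff, map_sub, restrict_eq_self hin,
    sub_eq_zero] at hout
  exact hout.symm

/-- If `φ` is constant along the facets inside `F`, the chain complex of `F` is the direct sum of
those of the fibres of `φ`. -/
lemma exactAt_iff_forall_fiber {α : Type*} {φ : Finset E → α}
    (hφ : ∀ S ∈ F, ∀ e ∈ S, S.erase e ∈ F → φ (S.erase e) = φ S) :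
    ExactAt K F p ↔ ∀ a, ExactAt K (F ∩ φ ⁻¹' {a}) p := by
  classical
  have hcomm (a : α) {x : Finset E →₀ K} (hx : x ∈ supported K K F) :
      relBoundary K (F ∩ φ ⁻¹' {a}) (restrict K (φ ⁻¹' {a}) x) =
        restrict K (φ ⁻¹' {a}) (relBoundary K F x) := by
    rw [← restrict_relBoundary, relBoundary_restrict_preimage hφ _ hx, restrict_restrict,
      Set.inter_self]
  have hself (a : α) {p : ℤ} {x : Finset E →₀ K} (hx : x ∈ chains K (F ∩ φ ⁻¹' {a}) p) :
      relBoundary K (F ∩ φ ⁻¹' {a}) x = relBoundary K F x := by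
    rw [← restrict_relBoundary, ← relBoundary_restrict_preimage hφ _
      (supported_mono Set.inter_subset_left (chains_le_supported hx)), restrict_eq_self
      (supported_mono Set.inter_subset_right (chains_le_supported hx))]
  refine ⟨fun h a => ?_, fun h => ?_⟩
  · rintro x ⟨hx, hx0⟩
    obtain ⟨y, hy, hyx⟩ := h ⟨chains_mono Set.inter_subset_left hx, by
      rwa [SetLike.mem_coe, LinearMap.mem_ker, ← hself a hx]⟩
    refine ⟨restrict K (φ ⁻¹' {a}) y, restrict_mem_chains _ hy, ?_⟩
    rw [hcomm a (chains_le_supported hy), hyx, restrict_eq_self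
      (supported_mono Set.inter_subset_right (chains_le_supported hx))]
  · rintro x ⟨hx, hx0⟩
    have hsum : x = ∑ a ∈ x.support.image φ, restrict K (φ ⁻¹' {a}) x := by
      ext S
      simp only [finsetSum_apply, restrict_apply, Set.indicator_apply, Set.mem_preimage,
        Set.mem_singleton_iff, Finset.sum_ite_eq, Finset.mem_image, mem_support_iff]
      split_ifs with h
      · rfl
      · exact not_not.1 fun hS => h ⟨S, hS, rfl⟩
    rw [hsum]
    refine sum_mem fun a _ => ?_
    obtain ⟨y, hy, hyx⟩ := h a ⟨restrict_mem_chains _ hx, by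
      rw [SetLike.mem_coe, LinearMap.mem_ker, hcomm a (chains_le_supported hx),
        show relBoundary K F x = 0 from hx0, map_zero]⟩
    exact ⟨y, chains_mono Set.inter_subset_left hy, by rw [← hself a hy, hyx]⟩

end Fibers

section UnionIcc

variable {K E : Type} [Field K] {V : Type*} [DecidableEq V] {s : E → Finset V}
  {B W : Finset V} {p : ℤ}

/-- The sets of indices whose members `s e` have a union between `B` and `W`. When `s` lists the
supports of squarefree monomials, `unionIcc s W W` indexes the basis of the Taylor complex in the
squarefree multidegree `W`. -/
def unionIcc (s : E → Finset V) (B W : Finset V) : Set (Finset E) :=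
  {S | S.biUnion s ∈ Set.Icc B W}

lemma ordConnected_unionIcc : (unionIcc s B W).OrdConnected :=
  Set.ordConnected_Icc.preimage_mono fun _ _ h => Finset.biUnion_subset_biUnion_of_subset_left s h

lemma isUpperSet_mem_biUnion (s : E → Finset V) (v : V) :
    IsUpperSet {S : Finset E | v ∈ S.biUnion s} :=
  fun _ _ h hv => Finset.biUnion_subset_biUnion_of_subset_left s h hv

lemma unionIcc_inter (v : V) :
    unionIcc s B W ∩ {S | v ∈ S.biUnion s} = unionIcc s (insert v B) W := by
  ext S
  simp only [unionIcc, Set.mem_inter_iff, Set.mem_ofPred_eq, Set.mem_Icc,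
    Finset.insert_subset_iff]
  tauto

lemma unionIcc_sdiff (v : V) :
    unionIcc s B W \ {S | v ∈ S.biUnion s} = unionIcc s B (W.erase v) := by
  ext S
  simp only [unionIcc, Set.mem_sdiff, Set.mem_ofPred_eq, Set.mem_Icc,
    Finset.subset_erase, and_assoc]

variable [LinearOrder E]

lemma exactAt_unionIcc_of_erase_of_insert (v : V) (hdel : ExactAt K (unionIcc s B (W.erase v)) p)
    (hins : ExactAt K (unionIcc s (insert v B) W) p) : ExactAt K (unionIcc s B W) p := by
  rw [← unionIcc_sdiff] at hdel
  rw [← unionIcc_inter] at hins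
  exact hdel.of_sdiff_of_inter ordConnected_unionIcc (isUpperSet_mem_biUnion s v) hins

lemma exactAt_unionIcc_insert (v : V) (htotal : ExactAt K (unionIcc s B W) (p + 1))
    (hdel : ExactAt K (unionIcc s B (W.erase v)) p) :
    ExactAt K (unionIcc s (insert v B) W) (p + 1) := by
  rw [← unionIcc_sdiff] at hdel
  rw [← unionIcc_inter]
  exact htotal.inter ordConnected_unionIcc (isUpperSet_mem_biUnion s v) hdel

lemma exactAt_unionIcc_erase (v : V) (hins : ExactAt K (unionIcc s (insert v B) W) (p + 1))
    (htotal : ExactAt K (unionIcc s B W) p) : ExactAt K (unionIcc s B (W.erase v)) p := by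
  rw [← unionIcc_inter] at hins
  rw [← unionIcc_sdiff]
  exact hins.sdiff ordConnected_unionIcc (isUpperSet_mem_biUnion s v) htotal

lemma exactAt_unionIcc_of_disjoint {e : E} (he : s e ⊆ W) (hB : Disjoint (s e) B) (p : ℤ) :
    ExactAt K (unionIcc s B W) p := by
  refine .of_insert_mem_iff (e := e) (fun S _ => ?_) p
  simp only [unionIcc, Set.mem_ofPred_eq, Finset.biUnion_insert, Set.mem_Icc]
  exact and_congr ⟨hB.symm.left_le_of_le_sup_left, fun h => h.trans Finset.subset_union_right⟩
    ⟨Finset.union_subset_right, Finset.union_subset he⟩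

lemma exactAt_unionIcc_insert_iff {e : E} (b : V) (he : s e ⊆ W) (hB : Disjoint (s e) B) :
    ExactAt K (unionIcc s (insert b B) W) (p + 1) ↔ ExactAt K (unionIcc s B (W.erase b)) p :=
  ⟨fun h => exactAt_unionIcc_erase b h (exactAt_unionIcc_of_disjoint he hB p),
    exactAt_unionIcc_insert b (exactAt_unionIcc_of_disjoint he hB (p + 1))⟩

/-- Each index `e` with `s e = {v, m}` makes the family acyclic until `m` is forced into the
union, so every `m ∈ M` can be deleted at the cost of one degree. -/
lemma exactAt_unionIcc_union_iff {v : V} {N M : Finset V} (hvN : v ∉ N) (hvM : v ∉ M)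
    (hNM : Disjoint N M) (hM : ∀ m ∈ M, ∃ e, s e = {v, m}) :
    ExactAt K (unionIcc s (N ∪ M) (insert v (N ∪ M))) (p + M.card) ↔
      ExactAt K (unionIcc s N (insert v N)) p := by
  induction M using Finset.induction_on with
  | empty => rw [Finset.union_empty, Finset.card_empty, Nat.cast_zero, add_zero]
  | insert m M hmM ih =>
    rw [Finset.forall_mem_insert] at hM
    rw [Finset.mem_insert, not_or] at hvM
    rw [Finset.disjoint_insert_right] at hNM
    obtain ⟨e, he⟩ := hM.1
    have hm : m ∉ N ∪ M := by simp [hNM.1, hmM]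
    have hv : v ∉ N ∪ M := by simp [hvN, hvM.2]
    have hsub : s e ⊆ insert v (insert m (N ∪ M)) := by
      rw [he]; exact Finset.insert_subset_insert v (by simp)
    have hdisj : Disjoint (s e) (N ∪ M) := by
      rw [he, Finset.disjoint_insert_left, Finset.disjoint_singleton_left]; exact ⟨hv, hm⟩
    rw [Finset.union_insert, Finset.card_insert_of_notMem hmM, Nat.cast_add_one, ← add_assoc,
      exactAt_unionIcc_insert_iff m hsub hdisj, Finset.insert_comm, Finset.erase_insert, ih]
    · exact hvM.2
    · exact hNM.2
    · exact hM.2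
    · rw [Finset.mem_insert, not_or]
      exact ⟨Ne.symm hvM.1, hm⟩

end UnionIcc

section EdgeListing

variable {K E : Type} [Field K] {V : Type*} [DecidableEq V] {G : SimpleGraph V}
  {s : E → Finset V} {W N : Finset V} {v : V} {p : ℤ}

/-- `s` enumerates the edges of `G`, as two-element sets of vertices, without repetition. -/
structure IsEdgeListing (G : SimpleGraph V) (s : E → Finset V) : Prop where
  injective : Function.Injective s
  mem_range_iff : ∀ A, A ∈ Set.range s ↔ ∃ a b, G.Adj a b ∧ A = {a, b}

lemma IsEdgeListing.exists_eq_pair (hs : IsEdgeListing G s) (e : E) :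
    ∃ a b, G.Adj a b ∧ s e = {a, b} :=
  (hs.mem_range_iff _).1 ⟨e, rfl⟩

lemma IsEdgeListing.exists_eq_of_adj (hs : IsEdgeListing G s) {a b : V} (h : G.Adj a b) :
    ∃ e, s e = {a, b} :=
  (hs.mem_range_iff _).2 ⟨a, b, h, rfl⟩

lemma IsEdgeListing.subset_of_subset_insert (hs : IsEdgeListing G s)
    (hN : ∀ w ∈ N, ¬ G.Adj v w) {e : E} (he : s e ⊆ insert v N) : s e ⊆ N := by
  obtain ⟨a, b, hab, hse⟩ := hs.exists_eq_pair e
  have := hab.ne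
  rw [hse, Finset.insert_subset_iff, Finset.singleton_subset_iff, Finset.mem_insert,
    Finset.mem_insert] at he
  rw [hse, Finset.insert_subset_iff, Finset.singleton_subset_iff]
  rcases he with ⟨rfl | ha, rfl | hb⟩
  · exact absurd rfl this
  · exact absurd hab (hN b hb)
  · exact absurd hab.symm (hN a ha)
  · exact ⟨ha, hb⟩

lemma unionIcc_insert_right_eq (hs : IsEdgeListing G s) (hN : ∀ w ∈ N, ¬ G.Adj v w) :
    unionIcc s N (insert v N) = unionIcc s N N := by
  ext S
  simp only [unionIcc, Set.mem_ofPred_eq, Set.mem_Icc, and_congr_right_iff,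
    Finset.biUnion_subset_iff_forall_subset]
  exact fun _ => ⟨fun h e he => hs.subset_of_subset_insert hN (h e he),
    fun h e he => (h e he).trans (Finset.subset_insert v N)⟩

variable [LinearOrder E]

/-- The comparison term between the strands of `W` and of `W.erase v` is, up to a shift by the
number of `G`-neighbours of `v`, the strand of the set `N` of its non-neighbours. -/
lemma exactAt_unionIcc_erase_left_iff (hs : IsEdgeListing G s) (hv : v ∈ W)
    (hN : ∀ w, w ∈ N ↔ w ∈ W ∧ Gᶜ.Adj v w) {q : ℤ} (hpq : p + N.card + 1 = q + W.card) :
    ExactAt K (unionIcc s (W.erase v) W) p ↔ ExactAt K (unionIcc s N N) q := by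
  simp only [SimpleGraph.compl_adj] at hN
  have hsub : N ⊆ W.erase v := fun w hw => by
    rw [Finset.mem_erase]; exact ⟨((hN w).1 hw).2.1.symm, ((hN w).1 hw).1⟩
  have hunion := Finset.union_sdiff_of_subset hsub
  have hcard := Finset.card_sdiff_add_card_eq_card hsub
  have hcardW := Finset.card_erase_add_one hv
  have hstar := exactAt_unionIcc_union_iff (K := K) (s := s) (v := v) (N := N)
    (M := W.erase v \ N) (p := q) (fun h => Finset.notMem_erase v W (hsub h)) (by simp)
    Finset.disjoint_sdiff fun m hm => hs.exists_eq_of_adj <| by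
      rw [Finset.mem_sdiff, Finset.mem_erase, hN] at hm; tauto
  rw [hunion, Finset.insert_erase hv, unionIcc_insert_right_eq hs fun w hw => ((hN w).1 hw).2.2]
    at hstar
  rw [← hstar]
  congr! 1
  lia

lemma exactAt_unionIcc_of_isClique_compl (hs : IsEdgeListing G s) (hN : Gᶜ.IsClique (N : Set V))
    (h : N.Nonempty ∨ p ≠ 0) : ExactAt K (unionIcc s N N) p := by
  refine .of_card_ne fun S ⟨hNS, hSN⟩ hp => ?_
  have hS : S = ∅ := Finset.eq_empty_of_forall_notMem fun e he => by
    obtain ⟨a, b, hab, hse⟩ := hs.exists_eq_pair e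
    have hpair : {a, b} ⊆ N := hse ▸ (Finset.subset_biUnion_of_mem s he).trans hSN
    exact (hN (hpair (by simp)) (hpair (by simp)) hab.ne).2 hab
  subst hS
  rcases h with hne | hp0
  · exact hne.ne_empty (Finset.subset_empty.1 hNS)
  · exact hp0 (by rw [← hp, Finset.card_empty, Nat.cast_zero])

lemma exactAt_unionIcc_of_isClique_neighbors (hs : IsEdgeListing G s) (hv : v ∈ W)
    (hN : ∀ w, w ∈ N ↔ w ∈ W ∧ Gᶜ.Adj v w) (hclique : Gᶜ.IsClique (N : Set V))
    (hne : N.Nonempty ∨ p + 2 ≠ W.card)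
    (hdel : ExactAt K (unionIcc s (W.erase v) (W.erase v)) p) :
    ExactAt K (unionIcc s W W) (p + 1) := by
  have hlink : ExactAt K (unionIcc s (W.erase v) W) (p + 1) := by
    rw [exactAt_unionIcc_erase_left_iff hs hv hN (q := p + 2 + N.card - W.card) (by ring)]
    refine exactAt_unionIcc_of_isClique_compl hs hclique ?_
    rcases N.eq_empty_or_nonempty with rfl | hN'
    · right
      have := hne.resolve_left Finset.not_nonempty_empty
      rw [Finset.card_empty, Nat.cast_zero]
      lia
    · exact .inl hN'
  simpa only [Finset.insert_erase hv] using exactAt_unionIcc_insert v hlink hdel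

lemma not_exactAt_unionIcc_pair (hs : IsEdgeListing G s) {a b : V} (hab : G.Adj a b) :
    ¬ ExactAt K (unionIcc s {a, b} {a, b}) 1 := by
  obtain ⟨e, he⟩ := hs.exists_eq_of_adj hab
  have hsingle : unionIcc s {a, b} {a, b} = {{e}} := by
    ext S
    rw [Set.mem_singleton_iff]
    refine ⟨fun ⟨hpS, hSp⟩ => ?_, fun hS => ?_⟩
    · have hSe : S ⊆ {e} := fun f hf => by
        obtain ⟨c, d, hcd, hsf⟩ := hs.exists_eq_pair f
        refine Finset.mem_singleton.2 (hs.injective (he.symm ▸ Finset.eq_of_subset_of_card_le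
          ((Finset.subset_biUnion_of_mem s hf).trans hSp) ?_))
        rw [hsf, Finset.card_pair hcd.ne, Finset.card_pair hab.ne]
      refine (Finset.subset_singleton_iff.1 hSe).resolve_left ?_
      rintro rfl
      exact absurd (Finset.subset_empty.1 hpS) (Finset.insert_ne_empty a {b})
    · rw [hS, unionIcc, Set.mem_ofPred_eq, Finset.singleton_biUnion, he, Set.Icc_self]
      rfl
  rw [hsingle]
  exact_mod_cast not_exactAt_singleton (K := K) {e}

end EdgeListing

section InducedCycle

variable {V : Type} {H : SimpleGraph V} {l : ℕ}

/-- `h 0, …, h (l - 1)` are the successive vertices of an induced cycle of `H`. -/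
structure IsInducedCycle (H : SimpleGraph V) (l : ℕ) (h : ℕ → V) : Prop where
  injOn : Set.InjOn h (Set.Iio l)
  adj_iff : ∀ i j, i < j → j < l → (H.Adj (h i) (h j) ↔ j = i + 1 ∨ i = 0 ∧ j + 1 = l)

lemma natCast_zmod_eq_add_one_iff {i j : ℕ} (hi : i < l) (hj : j < l) :
    (j : ZMod l) = i + 1 ↔ j = i + 1 ∨ j = 0 ∧ i + 1 = l := by
  rw [← Nat.cast_add_one, ZMod.natCast_eq_natCast_iff', Nat.mod_eq_of_lt hj]
  rcases (Nat.succ_le_of_lt hi).lt_or_eq with h | h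
  · rw [Nat.mod_eq_of_lt h]
    lia
  · rw [← h, Nat.mod_self]
    lia

lemma hasInducedCycle_iff (hl : 1 < l) :
    HasInducedCycle H l ↔ ∃ h, IsInducedCycle H l h := by
  have : NeZero l := ⟨by lia⟩
  constructor
  · rintro ⟨f, hinj, hadj⟩
    refine ⟨fun i => f i, fun i hi j hj hij => ?_, fun i j hij hj => ?_⟩
    · have := hinj hij
      rwa [ZMod.natCast_eq_natCast_iff', Nat.mod_eq_of_lt hi, Nat.mod_eq_of_lt hj] at this
    · rw [hadj, natCast_zmod_eq_add_one_iff (hij.trans hj) hj,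
        natCast_zmod_eq_add_one_iff hj (hij.trans hj)]
      lia
  · rintro ⟨h, hh⟩
    refine ⟨fun a => h a.val, fun a b hab => ZMod.val_injective l
      (hh.injOn (ZMod.val_lt a) (ZMod.val_lt b) hab), fun a b => ?_⟩
    have ha := ZMod.val_lt a
    have hb := ZMod.val_lt b
    have hiff := natCast_zmod_eq_add_one_iff ha hb
    have hiff' := natCast_zmod_eq_add_one_iff hb ha
    rw [ZMod.natCast_zmod_val, ZMod.natCast_zmod_val] at hiff hiff'
    rw [hiff, hiff']
    rcases lt_trichotomy a.val b.val with hab | hab | hab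
    · rw [hh.adj_iff _ _ hab hb]
      lia
    · simp only [hab, SimpleGraph.irrefl, false_iff]
      lia
    · rw [SimpleGraph.adj_comm, hh.adj_iff _ _ hab ha]
      lia

lemma HasInducedCycle.map {V' : Type} {H' : SimpleGraph V'} (φ : H ↪g H')
    (h : HasInducedCycle H l) : HasInducedCycle H' l := by
  obtain ⟨f, hinj, hadj⟩ := h
  exact ⟨φ ∘ f, φ.injective.comp hinj, fun i j => φ.map_adj_iff.trans (hadj i j)⟩

lemma Chordal.of_embedding {V' : Type} {H' : SimpleGraph V'} (hH' : Chordal H') (φ : H ↪g H') :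
    Chordal H :=
  fun l hl h => hH' l hl (h.map φ)

lemma HasInducedCycle.le_card [Fintype V] (hl : l ≠ 0) (h : HasInducedCycle H l) :
    l ≤ Fintype.card V := by
  have : NeZero l := ⟨hl⟩
  obtain ⟨f, hinj, -⟩ := h
  simpa only [ZMod.card] using Fintype.card_le_of_injective f hinj

end InducedCycle

section Walks

variable {V : Type*} {H : SimpleGraph V} {s t : V}

lemma dist_getVert {p : H.Walk s t} (hp : p.length = H.dist s t) {i : ℕ} (hi : i ≤ p.length) :
    H.dist s (p.getVert i) = i := by
  rw [← SimpleGraph.length_eq_dist_of_subwalk hp (p.isSubwalk_take i), SimpleGraph.Walk.take_length,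
    min_eq_left hi]

lemma adj_getVert_iff {p : H.Walk s t} (hp : p.length = H.dist s t) {i j : ℕ} (hij : i < j)
    (hj : j ≤ p.length) : H.Adj (p.getVert i) (p.getVert j) ↔ j = i + 1 := by
  refine ⟨fun h => ?_, fun h => h ▸ p.adj_getVert_succ (by lia)⟩
  have := h.diff_dist_adj (u := s)
  rw [dist_getVert hp hj, dist_getVert hp (hij.le.trans hj)] at this
  lia

lemma exists_preconnected_induce (H : SimpleGraph V) {D : Set V} {u : V} (hu : u ∈ D) :
    ∃ C ⊆ D, u ∈ C ∧ (H.induce C).Preconnected ∧ ∀ x ∈ C, ∀ y ∈ D, H.Adj x y → y ∈ C := by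
  set c := (H.induce D).connectedComponentMk ⟨u, hu⟩
  refine ⟨Subtype.val '' c.supp, ?_, ⟨_, rfl, rfl⟩, ?_, ?_⟩
  · exact Subtype.coe_image_subset D c.supp
  · let φ : c.toSimpleGraph →g H.induce (Subtype.val '' c.supp) :=
      ⟨fun x => ⟨x.1.1, x.1, x.2, rfl⟩, fun h => h⟩
    refine c.connected_toSimpleGraph.preconnected.map φ ?_
    rintro ⟨_, x, hx, rfl⟩
    exact ⟨⟨x, hx⟩, rfl⟩
  · rintro _ ⟨x, hx, rfl⟩ y hy hxy
    exact ⟨⟨y, hy⟩, (c.mem_supp_congr_adj (w := ⟨y, hy⟩) (H.induce_adj.2 hxy)).1 hx, rfl⟩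

lemma reachable_induce_of_adj {C Q : Set V} (hC : (H.induce C).Preconnected) (hCQ : C ⊆ Q)
    {s t : Q} {c d : V} (hc : c ∈ C) (hd : d ∈ C) (hsc : H.Adj s c) (htd : H.Adj t d) :
    (H.induce Q).Reachable s t := by
  have hcd := (hC ⟨c, hc⟩ ⟨d, hd⟩).map (SimpleGraph.induceHomOfLE H hCQ).toHom
  have hs : (H.induce Q).Adj s ⟨c, hCQ hc⟩ := hsc
  have ht : (H.induce Q).Adj t ⟨d, hCQ hd⟩ := htd
  exact hs.reachable.trans (hcd.trans ht.symm.reachable)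

lemma exists_forall_not_adj_notMem {R : Set V} (hR : H.IsClique R) (hH : H ≠ ⊤) :
    ∃ v u, v ≠ u ∧ ¬ H.Adj v u ∧ ∀ z, v ≠ z → ¬ H.Adj v z → z ∉ R := by
  by_cases h : ∃ v ∈ R, ∃ u, v ≠ u ∧ ¬ H.Adj v u
  · obtain ⟨v, hvR, u, hvu, hnadj⟩ := h
    exact ⟨v, u, hvu, hnadj, fun z hvz hz hzR => hz (hR hvR hzR hvz)⟩
  · obtain ⟨v, u, hvu, hnadj⟩ := SimpleGraph.ne_top_iff_exists_not_adj.1 hH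
    exact ⟨v, u, hvu, hnadj, fun z hvz hz hzR => h ⟨z, hzR, v, hvz.symm, mt H.adj_symm hz⟩⟩

end Walks

section Dirac

variable {V : Type} {H : SimpleGraph V}

/-- A shortest path from `s` to `t` inside `Q` closes up through `v` to an induced cycle. -/
lemma exists_hasInducedCycle_of_reachable_induce {Q : Set V} {v : V} (hv : v ∉ Q) (s t : Q)
    (hst : s ≠ t) (hnadj : ¬ H.Adj s t) (hQ : ∀ x : Q, H.Adj x v ↔ x = s ∨ x = t)
    (hreach : (H.induce Q).Reachable s t) : ∃ l, 3 < l ∧ HasInducedCycle H l := by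
  obtain ⟨p, hp⟩ := hreach.exists_walk_length_eq_dist
  have hinj := (p.isPath_of_length_eq_dist hp).getVert_injOn
  have hlen : 1 < p.length := hp ▸ hreach.one_lt_dist_of_ne_of_not_adj hst hnadj
  refine ⟨p.length + 2, by lia, (hasInducedCycle_iff (by lia)).2
    ⟨fun i => if i ≤ p.length then p.getVert i else v, fun i hi j hj hij => ?_,
      fun i j hij hj => ?_⟩⟩
  · rw [Set.mem_Iio] at hi hj
    split_ifs at hij with hi' hj' hj'
    · exact hinj hi' hj' (Subtype.ext hij)
    · exact absurd (hij ▸ (p.getVert i).2) hv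
    · exact absurd (hij ▸ (p.getVert j).2) hv
    · lia
  · rw [if_pos (show i ≤ p.length by lia)]
    split_ifs with hj'
    · rw [← SimpleGraph.induce_adj, adj_getVert_iff hp hij hj']
      lia
    · have hstart : p.getVert i = s ↔ i = 0 :=
        ⟨fun h => hinj (show i ≤ p.length by lia) (Nat.zero_le _) (h.trans p.getVert_zero.symm),
          fun h => h ▸ p.getVert_zero⟩
      have hend : p.getVert i = t ↔ i = p.length :=
        ⟨fun h => hinj (show i ≤ p.length by lia) (le_refl p.length)
          (h.trans p.getVert_length.symm),
          fun h => h ▸ p.getVert_length⟩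
      rw [hQ, hstart, hend]
      lia

lemma Chordal.isClique_neighbors_of_preconnected (hH : Chordal H) {C : Set V} {v : V}
    (hC : (H.induce C).Preconnected) (hv : v ∉ C) (hvC : ∀ c ∈ C, ¬ H.Adj v c) :
    H.IsClique {x | H.Adj v x ∧ ∃ c ∈ C, H.Adj x c} := by
  rintro s ⟨hvs, c, hc, hsc⟩ t ⟨hvt, d, hd, htd⟩ hst
  by_contra hnadj
  have hQ : ∀ x : ↑(C ∪ {s, t}), H.Adj x v ↔ x = ⟨s, by simp⟩ ∨ x = ⟨t, by simp⟩ := by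
    rintro ⟨x, hx⟩
    rw [Subtype.mk.injEq, Subtype.mk.injEq]
    refine ⟨fun hxv => hx.resolve_left fun hxC => hvC x hxC hxv.symm, ?_⟩
    rintro (rfl | rfl)
    · exact hvs.symm
    · exact hvt.symm
  obtain ⟨l, hl, hcycle⟩ := exists_hasInducedCycle_of_reachable_induce
    (by simp [hv, hvs.ne, hvt.ne]) _ _ (by simpa) hnadj hQ
    (reachable_induce_of_adj hC Set.subset_union_left hc hd hsc htd)
  exact hH l hl hcycle

/-- A component `C` of the non-neighbours of a non-universal vertex attaches to the rest of the
graph along a clique `S`, and `C ∪ S` contains all neighbours of vertices of `C`; by induction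
`C ∪ S` has a simplicial vertex in `C`. -/
theorem Chordal.exists_isClique_neighborSet_of_isClique {V : Type} [Finite V] {H : SimpleGraph V}
    (hH : Chordal H) {R : Set V} (hR : H.IsClique R) (hne : R ≠ Set.univ) :
    ∃ z ∉ R, H.IsClique (H.neighborSet z) := by
  by_cases hcomplete : H = ⊤
  · obtain ⟨z, hz⟩ := (Set.ne_univ_iff_exists_notMem R).1 hne
    exact ⟨z, hz, hcomplete ▸ fun x _ y _ hxy => hxy⟩
  obtain ⟨v, u, hvu, hnadj, hv⟩ := exists_forall_not_adj_notMem hR hcomplete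
  obtain ⟨C, hCD, huC, hC, hCmax⟩ := exists_preconnected_induce H
    (D := {x | v ≠ x ∧ ¬ H.Adj v x}) (u := u) ⟨hvu, hnadj⟩
  set S := {x | H.Adj v x ∧ ∃ c ∈ C, H.Adj x c}
  have hS : H.IsClique S := hH.isClique_neighbors_of_preconnected hC (fun h => (hCD h).1 rfl)
    fun c hc => (hCD hc).2
  have hnbr : ∀ x ∈ C, H.neighborSet x ⊆ C ∪ S := fun x hx y hxy => by
    by_cases hvy : H.Adj v y
    · exact .inr ⟨hvy, x, hx, hxy.symm⟩
    · refine .inl (hCmax x hx y ⟨?_, hvy⟩ hxy)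
      rintro rfl
      exact (hCD hx).2 hxy.symm
  obtain ⟨⟨z, hzCS⟩, hzS, hz⟩ := Chordal.exists_isClique_neighborSet_of_isClique
    (R := ((↑) : ↑(C ∪ S) → V) ⁻¹' S)
    (hH.of_embedding (SimpleGraph.Embedding.induce (C ∪ S)))
    (fun x hx y hy hxy => hS hx hy (Subtype.coe_injective.ne hxy))
    ((Set.ne_univ_iff_exists_notMem _).2 ⟨⟨u, .inl huC⟩, fun h => hnadj h.1⟩)
  have hzC : z ∈ C := hzCS.resolve_right hzS
  refine ⟨z, hv z (hCD hzC).1 (hCD hzC).2, fun x hx y hy hxy => ?_⟩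
  exact hz (x := ⟨x, hnbr z hzC hx⟩) hx (y := ⟨y, hnbr z hzC hy⟩) hy
    (mt (congrArg Subtype.val) hxy)
termination_by Nat.card V
decreasing_by
  exact Set.ncard_lt_card ((Set.ne_univ_iff_exists_notMem _).2
    ⟨v, fun h => h.elim (fun h => (hCD h).1 rfl) fun h => H.irrefl h.1⟩)

lemma Chordal.exists_isClique_inter_neighborSet {W : Set V} [Finite W] (hW : W.Nonempty)
    (hH : Chordal (H.induce W)) : ∃ v ∈ W, H.IsClique (W ∩ H.neighborSet v) := by
  have := hW.to_subtype
  obtain ⟨⟨v, hv⟩, -, hclique⟩ := hH.exists_isClique_neighborSet_of_isClique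
    SimpleGraph.isClique_empty Set.empty_ne_univ
  exact ⟨v, hv, fun x hx y hy hxy => hclique (x := ⟨x, hx.1⟩) hx.2 (y := ⟨y, hy.1⟩) hy.2
    (mt (congrArg Subtype.val) hxy)⟩

end Dirac

section SquarefreeStrands

variable {K : Type} [Field K] {E V : Type} [LinearOrder E] [DecidableEq V] {G : SimpleGraph V}
  {s : E → Finset V} {l : ℕ} {h : ℕ → V}

lemma not_exactAt_unionIcc_neighbors (hs : IsEdgeListing G s) {v : V} {W N : Finset V} {p q : ℤ}
    (hv : v ∈ W) (hN : ∀ w, w ∈ N ↔ w ∈ W ∧ Gᶜ.Adj v w) (hpq : p + N.card + 1 = q + W.card)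
    (hdel : ExactAt K (unionIcc s (W.erase v) (W.erase v)) (p - 1))
    (hex : ¬ ExactAt K (unionIcc s W W) p) : ¬ ExactAt K (unionIcc s N N) q := by
  rw [← exactAt_unionIcc_erase_left_iff hs hv hN hpq]
  intro htotal
  rw [← sub_add_cancel p 1] at htotal hex
  exact hex (by simpa only [Finset.insert_erase hv] using exactAt_unionIcc_insert v htotal hdel)

/-- Deleting a vertex preserves `W.card - p` and passing to the `Gᶜ`-neighbours of a vertex lowers
it by one, so the descent ends with `W.card = p + 2`, where a simplicial vertex of `Gᶜ` on `W`
would allow a further deletion. -/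
theorem exists_hasInducedCycle_of_not_exactAt (hs : IsEdgeListing G s) {W : Finset V} {p : ℤ}
    (hp : p + 2 ≤ W.card) (hex : ¬ ExactAt K (unionIcc s W W) p) :
    ∃ l : ℕ, 3 < l ∧ l ≤ p + 2 ∧ HasInducedCycle Gᶜ l := by
  classical
  induction W using Finset.strongInduction generalizing p with
  | H W ih =>
    have hdelete : ∀ v ∈ W, ¬ ExactAt K (unionIcc s (W.erase v) (W.erase v)) (p - 1) →
        ∃ l : ℕ, 3 < l ∧ l ≤ p + 2 ∧ HasInducedCycle Gᶜ l := fun v hv hdel => by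
      have hcard := Finset.card_erase_add_one hv
      obtain ⟨l, hl, hlp, hcycle⟩ := ih _ (Finset.erase_ssubset hv) (by lia) hdel
      exact ⟨l, hl, by lia, hcycle⟩
    have hW : W.Nonempty := Finset.card_pos.1 (by have := nonneg_of_not_exactAt hex; lia)
    rcases hp.lt_or_eq with hlt | heq
    · obtain ⟨v, hv⟩ := hW
      by_cases hdel : ExactAt K (unionIcc s (W.erase v) (W.erase v)) (p - 1)
      · set N := W.filter (Gᶜ.Adj v)
        have hNW : N ⊂ W := Finset.filter_ssubset.2 ⟨v, hv, Gᶜ.irrefl⟩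
        have hcard := Finset.card_lt_card hNW
        obtain ⟨l, hl, hlp, hcycle⟩ := ih N hNW (p := p + N.card + 1 - W.card) (by lia)
          (not_exactAt_unionIcc_neighbors hs hv (by simp [N]) (by ring) hdel hex)
        exact ⟨l, hl, by lia, hcycle⟩
      · exact hdelete v hv hdel
    by_cases hchordal : Chordal (Gᶜ.induce (W : Set V))
    · obtain ⟨v, hv, hclique⟩ := hchordal.exists_isClique_inter_neighborSet hW
      refine hdelete v hv fun hdel => hex ?_
      rw [← sub_add_cancel p 1]
      exact exactAt_unionIcc_of_isClique_neighbors hs (N := W.filter (Gᶜ.Adj v)) hv (by simp)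
        (by rwa [Finset.coe_filter]) (.inr (by lia)) hdel
    · simp only [Chordal, not_forall, not_not] at hchordal
      obtain ⟨l, hl, hcycle⟩ := hchordal
      have hcard : l ≤ W.card := by simpa using hcycle.le_card (by lia)
      exact ⟨l, hl, by lia, hcycle.map (SimpleGraph.Embedding.induce _)⟩

lemma erase_image_range_succ (hinj : Set.InjOn h (Set.Iic l)) :
    ((Finset.range (l + 1)).image h).erase (h l) = (Finset.range l).image h := by
  rw [Finset.range_add_one, Finset.image_insert, Finset.erase_insert]
  rw [Finset.mem_image]
  rintro ⟨i, hi, heq⟩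
  rw [Finset.mem_range] at hi
  exact hi.ne (hinj hi.le (le_refl l) heq)

lemma exactAt_unionIcc_path (hs : IsEdgeListing G s) (hinj : Set.InjOn h (Set.Iic l))
    (hadj : ∀ i j, i < j → j ≤ l → (Gᶜ.Adj (h i) (h j) ↔ j = i + 1)) (p : ℤ) :
    ExactAt K (unionIcc s ((Finset.range (l + 1)).image h) ((Finset.range (l + 1)).image h)) p := by
  induction l generalizing p with
  | zero => exact exactAt_unionIcc_of_isClique_compl hs (by simp) (.inl (by simp))
  | succ l ih =>
    have hdel := ih (hinj.mono (Set.Iic_subset_Iic.2 l.le_succ))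
      (fun i j hij hj => hadj i j hij (hj.trans l.le_succ)) (p - 1)
    rw [← erase_image_range_succ hinj] at hdel
    rw [← sub_add_cancel p 1]
    refine exactAt_unionIcc_of_isClique_neighbors hs
      (Finset.mem_image_of_mem h (Finset.self_mem_range_succ (l + 1))) (N := {h l}) (fun w => ?_)
      (by simp) (.inl (Finset.singleton_nonempty _)) hdel
    rw [Finset.mem_singleton]
    refine ⟨?_, fun ⟨hw, hlw⟩ => ?_⟩
    · rintro rfl
      exact ⟨Finset.mem_image_of_mem h (by simp),
        ((hadj l (l + 1) l.lt_succ_self le_rfl).2 rfl).symm⟩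
    · obtain ⟨i, hi, rfl⟩ := Finset.mem_image.1 hw
      rw [Finset.mem_range] at hi
      have hil : i ≠ l + 1 := fun h' => hlw.ne (h' ▸ rfl)
      rw [Nat.succ_injective ((hadj i (l + 1) (by lia) le_rfl).1 hlw.symm)]

lemma IsInducedCycle.mem_pair_iff {H : SimpleGraph V} (hh : IsInducedCycle H (l + 2) h) (w : V) :
    w ∈ ({h 0, h l} : Finset V) ↔
      w ∈ (Finset.range (l + 2)).image h ∧ H.Adj (h (l + 1)) w := by
  have hadj {i : ℕ} (hi : i < l + 1) : H.Adj (h (l + 1)) (h i) ↔ i = 0 ∨ i = l := by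
    rw [SimpleGraph.adj_comm, hh.adj_iff i (l + 1) hi (by lia)]
    lia
  rw [Finset.mem_insert, Finset.mem_singleton]
  constructor
  · rintro (rfl | rfl)
    · exact ⟨Finset.mem_image_of_mem h (by simp), (hadj (by lia)).2 (.inl rfl)⟩
    · exact ⟨Finset.mem_image_of_mem h (by simp), (hadj (by lia)).2 (.inr rfl)⟩
  · rintro ⟨hw, hlw⟩
    obtain ⟨i, hi, rfl⟩ := Finset.mem_image.1 hw
    rw [Finset.mem_range] at hi
    have hil : i ≠ l + 1 := fun h' => hlw.ne (h' ▸ rfl)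
    exact ((hadj (by lia)).1 hlw).imp (congrArg h) (congrArg h)

/-- Removing a vertex leaves an acyclic path, while the neighbours of that vertex are two
non-adjacent points. -/
theorem IsInducedCycle.not_exactAt (hs : IsEdgeListing G s) (hh : IsInducedCycle Gᶜ l h)
    (hl : 3 < l) :
    ¬ ExactAt K (unionIcc s ((Finset.range l).image h) ((Finset.range l).image h)) (l - 2) := by
  obtain ⟨m, rfl⟩ : ∃ m, l = m + 2 := ⟨l - 2, by lia⟩
  have hinj : Set.InjOn h (Set.Iic (m + 1)) := hh.injOn.mono fun i hi => Nat.lt_succ_of_le hi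
  have hpath := exactAt_unionIcc_path (K := K) hs (hinj.mono (Set.Iic_subset_Iic.2 m.le_succ))
    fun i j hij hj => by
      rw [hh.adj_iff i j hij (by lia)]
      lia
  have hne : h 0 ≠ h m := hinj.ne (show 0 ≤ m + 1 by lia) (show m ≤ m + 1 by lia) (by lia)
  have hadj : G.Adj (h 0) (h m) := by
    have := hh.adj_iff 0 m (by lia) (by lia)
    rw [SimpleGraph.compl_adj] at this
    by_contra hnadj
    have := this.1 ⟨hne, hnadj⟩
    lia
  intro hex
  refine not_exactAt_unionIcc_pair (K := K) hs hadj ?_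
  have hmem : h (m + 1) ∈ (Finset.range (m + 2)).image h :=
    Finset.mem_image_of_mem h (Finset.self_mem_range_succ (m + 1))
  rw [← exactAt_unionIcc_erase_left_iff hs hmem hh.mem_pair_iff (p := (m + 2 : ℕ) - 2)]
  · refine exactAt_unionIcc_of_erase_of_insert (h (m + 1)) ?_ (by rwa [Finset.insert_erase hmem])
    rw [erase_image_range_succ hinj]
    exact hpath _
  · rw [Finset.card_pair hne, Finset.card_image_of_injOn, Finset.card_range]
    · ring
    · exact hh.injOn.mono fun i hi => by simpa using hi

end SquarefreeStrands

section TaylorComplex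

variable {K : Type} [Field K] {n r : ℕ} {g : Fin r → Fin n → ℕ} {p j : ℕ}

lemma strand_eq_chains : strand K g p j = chains K {S | ∑ x, mlcm g S x = j} p := by
  rw [strand, chains, supported_eq_span_single]
  congr 1
  ext c
  simp only [Set.mem_image, Set.mem_inter_iff, Set.mem_ofPred_eq, Nat.cast_inj, and_assoc, eq_comm]
  exact exists_congr fun S => by tauto

lemma mlcm_erase_eq_iff (S : Finset (Fin r)) (k : Fin r) :
    mlcm g (S.erase k) = mlcm g S ↔ ∑ x, mlcm g (S.erase k) x = ∑ x, mlcm g S x := by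
  have hle : ∀ x ∈ Finset.univ, mlcm g (S.erase k) x ≤ mlcm g S x :=
    fun x _ => Finset.sup_mono (Finset.erase_subset k S)
  simp only [Finset.sum_eq_sum_iff_of_le hle, funext_iff, Finset.mem_univ, true_imp_iff]

lemma bdT_eq_relBoundary {x : Finset (Fin r) →₀ K}
    (hx : x ∈ supported K K {S | ∑ x, mlcm g S x = j}) :
    bdT K g x = relBoundary K {S | ∑ x, mlcm g S x = j} x := by
  rw [supported_eq_span_single] at hx
  refine LinearMap.eqOn_span ?_ hx
  rintro _ ⟨S, hS, rfl⟩
  rw [Set.mem_ofPred_eq] at hS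
  rw [relBoundary, LinearMap.comp_apply, bdS_single, map_sum, bdT, lsum_single,
    LinearMap.toSpanSingleton_apply, one_smul]
  refine Finset.sum_congr rfl fun k _ => ?_
  simp only [mlcm_erase_eq_iff, hS]
  split_ifs with h
  · rw [restrict_single_of_mem (by exact h), smul_single, smul_eq_mul, mul_one, one_mul, faceSign]
  · rw [restrict_single_of_notMem (by exact h)]

lemma torRank_eq_zero_iff :
    torRank K g p j = 0 ↔ ExactAt K {S | ∑ x, mlcm g S x = j} p := by
  set F := {S | ∑ x, mlcm g S x = j}
  have hmap : (chains K F (p + 1)).map (bdT K g) = (chains K F (p + 1)).map (relBoundary K F) :=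
    SetLike.coe_injective (Set.image_congr fun x hx => bdT_eq_relBoundary (chains_le_supported hx))
  have hker : chains K F p ⊓ LinearMap.ker (bdT K g) =
      chains K F p ⊓ LinearMap.ker (relBoundary K F) := by
    ext x
    simp only [Submodule.mem_inf, LinearMap.mem_ker]
    exact and_congr_right fun hx => by rw [bdT_eq_relBoundary (chains_le_supported hx)]
  rw [torRank, strand_eq_chains, strand_eq_chains, Nat.cast_add_one, hmap, hker, ExactAt,
    Nat.sub_eq_zero_iff_le]
  exact ⟨fun h => inf_eq_right.1 (Submodule.eq_of_le_of_finrank_le inf_le_right h),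
    fun h => by rw [inf_eq_right.2 h]⟩

end TaylorComplex

section EdgeIdeal

variable {K : Type} [Field K] {n : ℕ} (G : SimpleGraph (Fin n))

/-- The support of the `k`-th generator of the edge ideal of `G`. -/
noncomputable def edgeSupport (k : Fin (edgeFins G).card) : Finset (Fin n) :=
  ((edgeFins G).equivFin.symm k : Sym2 (Fin n)).toFinset

lemma isEdgeListing_edgeSupport : IsEdgeListing G (edgeSupport G) where
  injective k k' h := by
    refine (edgeFins G).equivFin.symm.injective (Subtype.ext (Sym2.ext fun x => ?_))
    rw [← Sym2.mem_toFinset, ← Sym2.mem_toFinset]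
    exact Finset.ext_iff.1 h x
  mem_range_iff A := by
    have hrange : Set.range (edgeSupport G) =
        Sym2.toFinset '' (edgeFins G : Set (Sym2 (Fin n))) := by
      rw [← Subtype.range_coe (s := (edgeFins G : Set (Sym2 (Fin n)))), ← Set.range_comp,
        ← (edgeFins G).equivFin.symm.surjective.range_comp]
      rfl
    rw [hrange]
    simp only [Set.mem_image, Sym2.exists, edgeFins, SimpleGraph.coe_edgeFinset,
      SimpleGraph.mem_edgeSet, Sym2.toFinset_mk_eq, eq_comm]

variable {G}

lemma sum_mlcm_edgeGens (S : Finset (Fin (edgeFins G).card)) :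
    ∑ x, mlcm (edgeGens G) S x = (S.biUnion (edgeSupport G)).card := by
  have hmlcm (x : Fin n) :
      mlcm (edgeGens G) S x = if x ∈ S.biUnion (edgeSupport G) then 1 else 0 := by
    have hsup : mlcm (edgeGens G) S x = S.sup fun k => if x ∈ edgeSupport G k then 1 else 0 := by
      simp only [mlcm, edgeGens, edgeSupport, Sym2.mem_toFinset]
    rw [hsup]
    split_ifs with hx
    · obtain ⟨k, hk, hxk⟩ := Finset.mem_biUnion.1 hx
      refine le_antisymm (Finset.sup_le fun k _ => by split_ifs <;> simp) ?_
      exact (if_pos hxk).ge.trans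
        (Finset.le_sup (f := fun k => if x ∈ edgeSupport G k then 1 else 0) hk)
    · refine Finset.sup_eq_bot_iff _ _ |>.2 fun k hk => if_neg fun hxk => ?_
      exact hx (Finset.mem_biUnion.2 ⟨k, hk, hxk⟩)
  simp only [hmlcm, Finset.sum_boole, Finset.filter_univ_mem, Nat.cast_id]

lemma torRank_edgeGens_eq_zero_iff {p j : ℕ} : torRank K (edgeGens G) p j = 0 ↔
    ∀ W : Finset (Fin n), W.card = j → ExactAt K (unionIcc (edgeSupport G) W W) p := by
  simp only [torRank_eq_zero_iff, sum_mlcm_edgeGens]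
  rw [exactAt_iff_forall_fiber (φ := fun S => S.biUnion (edgeSupport G))]
  · refine forall_congr' fun W => ?_
    have hfiber : {S | (S.biUnion (edgeSupport G)).card = j} ∩
        (fun S => S.biUnion (edgeSupport G)) ⁻¹' {W} =
        {S | W.card = j ∧ S ∈ unionIcc (edgeSupport G) W W} := by
      ext S
      simp only [Set.mem_inter_iff, Set.mem_ofPred_eq, Set.mem_preimage, Set.mem_singleton_iff,
        unionIcc, Set.Icc_self]
      exact ⟨fun h => ⟨h.2 ▸ h.1, h.2⟩, fun h => ⟨h.2 ▸ h.1, h.2⟩⟩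
    rw [hfiber]
    by_cases hW : W.card = j
    · simp only [hW, true_and, Set.ofPred_mem_eq, true_imp_iff]
    · exact iff_of_true (.of_card_ne fun S hS => absurd hS.1 hW) fun h => absurd h hW
  · intro S hS e he heS
    rw [Set.mem_ofPred_eq] at hS heS
    exact Finset.eq_of_subset_of_card_le
      (Finset.biUnion_subset_biUnion_of_subset_left _ (Finset.erase_subset e S))
      (hS.trans heS.symm).le

variable {i j l : ℕ}

lemma gBetti_ne_zero_iff : gBetti K G i j ≠ 0 ↔
    ∃ W : Finset (Fin n), W.card = j ∧
      ¬ ExactAt K (unionIcc (edgeSupport G) W W) (i + 1) := by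
  rw [gBetti, betti, Ne, torRank_edgeGens_eq_zero_iff, Nat.cast_add_one]
  simp only [not_forall, exists_prop]

theorem gBetti_ne_zero_of_hasInducedCycle (hl : 3 < l) (h : HasInducedCycle Gᶜ l) :
    gBetti K G (l - 3) l ≠ 0 := by
  obtain ⟨c, hc⟩ := (hasInducedCycle_iff (by lia)).1 h
  refine gBetti_ne_zero_iff.2 ⟨(Finset.range l).image c, ?_, ?_⟩
  · rw [Finset.card_image_of_injOn (by simpa using hc.injOn), Finset.card_range]
  · rw [Nat.cast_sub hl.le]
    convert hc.not_exactAt (K := K) (isEdgeListing_edgeSupport G) hl using 2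
    ring

theorem exists_hasInducedCycle_of_gBetti_ne_zero (hij : i + 2 < j) (h : gBetti K G i j ≠ 0) :
    ∃ l, 3 < l ∧ l ≤ i + 3 ∧ HasInducedCycle Gᶜ l := by
  obtain ⟨W, rfl, hW⟩ := gBetti_ne_zero_iff.1 h
  obtain ⟨l, hl, hli, hcycle⟩ :=
    exists_hasInducedCycle_of_not_exactAt (isEdgeListing_edgeSupport G) (by lia) hW
  exact ⟨l, hl, by lia, hcycle⟩

end EdgeIdeal

end EP

/-- **EGHP.** The Green–Lazarsfeld index of the edge ideal `I(G)` equals the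
length of the shortest induced cycle of length greater than `3` in the complement of `G`,
minus `3` (and is infinite if no such cycle exists). -/
theorem statement0 (K : Type) [Field K] (n : ℕ) (G : SimpleGraph (Fin n)) :
    EP.gIndex K G =
      sInf ((fun l : ℕ => (l : ℕ∞)) '' {l | 3 < l ∧ EP.HasInducedCycle Gᶜ l}) - 3 := by
  unfold EP.gIndex
  apply le_antisymm
  · obtain h | h := {l | 3 < l ∧ EP.HasInducedCycle Gᶜ l}.eq_empty_or_nonempty
    · simp [h]
    · obtain ⟨l, ⟨hl, hcycle⟩, hmin⟩ := csInf_mem (h.image (fun l : ℕ => (l : ℕ∞)))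
      rw [← hmin]
      exact sInf_le ⟨l - 3, l, by push_cast; rfl, by lia,
        EP.gBetti_ne_zero_of_hasInducedCycle hl hcycle⟩
  · apply le_sInf
    rintro _ ⟨i, j, rfl, hij, hbetti⟩
    obtain ⟨l, hl, hli, hcycle⟩ := EP.exists_hasInducedCycle_of_gBetti_ne_zero hij hbetti
    rw [tsub_le_iff_right]
    have hmem : l ∈ {l | 3 < l ∧ EP.HasInducedCycle Gᶜ l} := ⟨hl, hcycle⟩
    exact (sInf_le (Set.mem_image_of_mem _ hmem)).trans (by exact_mod_cast hli)
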